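/- arXiv:2208.11938 — 2 statements merged into one kernel-verified Lean document; each statement's English description precedes it below -/
import Mathlib

section
/- Let V be a finite-dimensional complex vector space and W a finite subgroup of GL(V) generated by its reflections, all of which have order 2. Let W₁, W₂ be irreducible parabolic subgroups of W with reflection sets R₁, R₂. Then the condition that s₁s₂ = s₂s₁ for every s₁ ∈ R₁ \ R₂ and every s₂ ∈ R₂ \ R₁ is equivalent to the condition: W₁ ⊆ W₂, or W₂ ⊆ W₁, or (W₁ ∩ W₂ = {1} and every element of W₁ commutes with every element of W₂). -/
open Module

/-- A reflection: a nontrivial invertible linear endomorphism whose fixed subspace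
`Ker(w - 1)` has codimension 1. -/
def IsReflection {V : Type*} [AddCommGroup V] [Module ℂ V]
    (w : (Module.End ℂ V)ˣ) : Prop :=
  w ≠ 1 ∧ finrank ℂ (LinearMap.ker ((w : Module.End ℂ V) - 1)) + 1 = finrank ℂ V

/-- A parabolic subgroup `W₀` of `W` with reflection set `R₀` is irreducible if the
subspace `V₀ = Σ_{s ∈ R₀} Im(s - 1)` is nonzero and the only `W₀`-invariant subspaces
of `V₀` are `0` and `V₀`. -/
def IsIrreducibleParabolic {V : Type*} [AddCommGroup V] [Module ℂ V]
    (W₀ : Subgroup (Module.End ℂ V)ˣ) (R₀ : Set (Module.End ℂ V)ˣ) : Prop :=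
  (⨆ s ∈ R₀, LinearMap.range ((s : Module.End ℂ V) - 1)) ≠ ⊥ ∧
  ∀ U : Submodule ℂ V, U ≤ (⨆ s ∈ R₀, LinearMap.range ((s : Module.End ℂ V) - 1)) →
    (∀ w ∈ W₀, ∀ v ∈ U, (w : Module.End ℂ V) v ∈ U) →
    U = ⊥ ∨ U = (⨆ s ∈ R₀, LinearMap.range ((s : Module.End ℂ V) - 1))

open MvPolynomial in
/-- The linear form `f`, written as a homogeneous polynomial in the coordinates of a basis. -/
noncomputable def linearFormPoly {V ι : Type*} [AddCommGroup V] [Module ℂ V] [Fintype ι]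
    (b : Basis ι ℂ V) : Dual ℂ V →ₗ[ℂ] MvPolynomial ι ℂ where
  toFun f := ∑ i, f (b i) • X i
  map_add' f g := by simp [add_smul, Finset.sum_add_distrib]
  map_smul' c f := by simp [mul_smul, Finset.smul_sum]

/-- `g` is the order-two reflection `x ↦ x - f x • a`. -/
def IsReflectionWith {V : Type*} [AddCommGroup V] [Module ℂ V]
    (g : Module.End ℂ V) (f : Dual ℂ V) (a : V) : Prop :=
  f a = 2 ∧ ∀ x, g x = x - f x • a

/-- A family of polynomials indexed by `G` whose members at `g` and `t * g` agree on the
hyperplane fixed by `t`, for every reflection `t ∈ T`. -/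
def IsCongruenceFamily {V ι G : Type*} [AddCommGroup V] [Module ℂ V] [Fintype ι] [Group G]
    (b : Basis ι ℂ V) (ρ : Representation ℂ G V) (T : Set G) (φ : G → MvPolynomial ι ℂ) : Prop :=
  ∀ g, ∀ t ∈ T, ∀ f : Dual ℂ V, f ≠ 0 → (∀ x, ρ t x = x → f x = 0) →
    linearFormPoly b f ∣ φ g - φ (t * g)

section LinearForms

variable {V ι : Type*} [AddCommGroup V] [Module ℂ V] [Fintype ι] (b : Basis ι ℂ V)

open MvPolynomial

lemma linearFormPoly_apply (f : Dual ℂ V) :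
    linearFormPoly b f = ∑ i, f (b i) • (X i : MvPolynomial ι ℂ) := rfl

lemma eval_linearFormPoly (f : Dual ℂ V) (v : V) :
    eval (b.repr v) (linearFormPoly b f) = f v := by
  conv_rhs => rw [← b.sum_repr v, map_sum]
  simp [linearFormPoly_apply, smul_eval, mul_comm]

lemma linearFormPoly_injective : Function.Injective (linearFormPoly b) := by
  intro f g h
  ext v
  rw [← eval_linearFormPoly b f, ← eval_linearFormPoly b g, h]

lemma linearFormPoly_ne_zero {f : Dual ℂ V} (hf : f ≠ 0) : linearFormPoly b f ≠ 0 :=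
  (map_ne_zero_iff _ (linearFormPoly_injective b)).2 hf

lemma totalDegree_linearFormPoly {f : Dual ℂ V} (hf : f ≠ 0) :
    (linearFormPoly b f).totalDegree = 1 := by
  refine IsHomogeneous.totalDegree ?_ (linearFormPoly_ne_zero b hf)
  refine IsHomogeneous.sum _ _ _ fun i _ ↦ ?_
  rw [smul_eq_C_mul]
  simpa using (isHomogeneous_C ι (f (b i))).mul (isHomogeneous_X ℂ i)

lemma prime_linearFormPoly {f : Dual ℂ V} (hf : f ≠ 0) : Prime (linearFormPoly b f) := by
  refine (irreducible_of_totalDegree_eq_one (totalDegree_linearFormPoly b hf) fun x hx ↦ ?_).prime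
  refine isUnit_iff_ne_zero.2 fun h0 ↦ linearFormPoly_ne_zero b hf ?_
  ext i
  simpa [h0] using hx i

lemma exists_smul_eq_of_linearFormPoly_dvd {f g : Dual ℂ V} (hf : f ≠ 0)
    (h : linearFormPoly b f ∣ linearFormPoly b g) : ∃ c : ℂ, g = c • f := by
  rcases eq_or_ne g 0 with rfl | hg
  · exact ⟨0, by simp⟩
  obtain ⟨q, hq⟩ := h
  have hq0 : q ≠ 0 := by
    rintro rfl
    exact linearFormPoly_ne_zero b hg (by simpa using hq)
  have hdeg := congrArg totalDegree hq
  rw [totalDegree_mul_of_isDomain (linearFormPoly_ne_zero b hf) hq0,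
    totalDegree_linearFormPoly b hf, totalDegree_linearFormPoly b hg] at hdeg
  obtain ⟨c, rfl⟩ : ∃ c, q = C c := ⟨_, totalDegree_eq_zero_iff_eq_C.1 (by lia)⟩
  refine ⟨c, linearFormPoly_injective b ?_⟩
  rw [map_smul, hq, smul_eq_C_mul, mul_comm]

lemma eq_zero_or_totalDegree_lt_of_linearFormPoly_mul {f : Dual ℂ V} (hf : f ≠ 0) {d : ℕ}
    {p q r : MvPolynomial ι ℂ} (hp : p = 0 ∨ p.totalDegree < d + 1)
    (hq : q = 0 ∨ q.totalDegree < d + 1) (h : p - q = linearFormPoly b f * r) :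
    r = 0 ∨ r.totalDegree < d := by
  refine or_iff_not_imp_left.2 fun hr ↦ ?_
  have hdeg := congrArg totalDegree h
  rw [totalDegree_mul_of_isDomain (linearFormPoly_ne_zero b hf) hr,
    totalDegree_linearFormPoly b hf] at hdeg
  have hsub := totalDegree_sub p q
  rcases hp with rfl | hp <;> rcases hq with rfl | hq <;> simp at hdeg hsub <;> lia

end LinearForms

section Reflections

variable {V : Type*} [AddCommGroup V] [Module ℂ V]

lemma IsReflectionWith.ne_zero {g : Module.End ℂ V} {f : Dual ℂ V} {a : V}
    (h : IsReflectionWith g f a) : f ≠ 0 := by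
  rintro rfl
  simpa using h.1

lemma IsReflectionWith.apply_eq_self_iff {g : Module.End ℂ V} {f : Dual ℂ V} {a : V}
    (h : IsReflectionWith g f a) {x : V} : g x = x ↔ f x = 0 := by
  have ha : a ≠ 0 := by
    rintro rfl
    simpa using h.1
  rw [h.2, sub_eq_self, smul_eq_zero_iff_left ha]

lemma IsReflectionWith.eq_smul {g : Module.End ℂ V} {f f' : Dual ℂ V} {a : V}
    (h : IsReflectionWith g f a) (h' : ∀ x, g x = x → f' x = 0) : f' = (f' a / 2) • f := by
  ext x
  have := h' (x - (f x / 2) • a) (h.apply_eq_self_iff.2 (by simp [h.1]))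
  simp only [map_sub, map_smul, smul_eq_mul] at this
  simp only [LinearMap.smul_apply, smul_eq_mul]
  linear_combination this

/-- In a finite faithful linear group, an order-two reflection is determined by its hyperplane. -/
lemma IsReflectionWith.eq_of_eq_smul {G : Type*} [Group G] [Finite G] {ρ : Representation ℂ G V}
    (hρ : Function.Injective ρ) {s t : G} {f f' : Dual ℂ V} {a a' : V} {c : ℂ}
    (hs : IsReflectionWith (ρ s) f a) (ht : IsReflectionWith (ρ t) f' a') (hc : f' = c • f) :
    s = t := by
  subst hc
  have ht1 : f (c • a') = 2 := by simpa using ht.1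
  have ht2 : ∀ x, ρ t x = x - f x • (c • a') := fun x ↦ by
    rw [ht.2, smul_smul, mul_comm]; rfl
  generalize c • a' = d at ht1 ht2
  have hpow : ∀ (n : ℕ) (x : V), ρ ((s * t) ^ n) x = x + (n * f x) • (a - d) := by
    intro n
    induction n with
    | zero => simp
    | succ n ih =>
      intro x
      rw [pow_succ, map_mul, Module.End.mul_apply, ih, map_mul, Module.End.mul_apply, ht2, hs.2]
      simp only [map_sub, map_smul, smul_eq_mul, hs.1, ht1]
      push_cast
      module
  have h0 := hpow (orderOf (s * t)) a
  rw [pow_orderOf_eq_one, map_one, Module.End.one_apply, left_eq_add, hs.1, smul_eq_zero] at h0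
  have hd : a - d = 0 := h0.resolve_left
    (mul_ne_zero (Nat.cast_ne_zero.2 (orderOf_pos _).ne') two_ne_zero)
  refine hρ (LinearMap.ext fun x ↦ ?_)
  rw [hs.2, ht2, sub_eq_zero.1 hd]

/-- Distinct commuting order-two reflections have orthogonal roots. -/
lemma IsReflectionWith.apply_eq_zero_of_commute {s t : Module.End ℂ V} {f g : Dual ℂ V} {a b : V}
    (hs : IsReflectionWith s f a) (ht : IsReflectionWith t g b) (hst : s * t = t * s)
    (hne : s ≠ t) : f b = 0 := by
  by_contra hfb
  have key : ∀ x, (f b * g x) • a = (g a * f x) • b := fun x ↦ by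
    have := LinearMap.congr_fun hst x
    simp only [Module.End.mul_apply, hs.2, ht.2, map_sub, map_smul, smul_eq_mul] at this
    linear_combination (norm := module) this
  have hab : a = (g a / 2) • b := by
    have := key b
    rw [ht.1, mul_comm (g a), mul_smul, mul_smul] at this
    have := smul_right_injective V hfb this
    linear_combination (norm := module) (1 / 2 : ℂ) • this
  have h4 : g a * f b = 4 := by
    have := congrArg f hab
    rw [map_smul, hs.1, smul_eq_mul] at this
    linear_combination -2 * this
  refine hne (LinearMap.ext fun x ↦ ?_)
  have hx := congrArg g (key x)
  simp only [map_smul, smul_eq_mul, ht.1] at hx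
  have hx' : f x * g a = 2 * g x := by linear_combination (-1 / 2 : ℂ) * hx + (g x / 2) * h4
  rw [hs.2, ht.2]
  congr 1
  rw [hab, smul_smul]
  congr 1
  linear_combination hx' / 2

end Reflections

section CongruenceFamilies

variable {V ι G : Type*} [AddCommGroup V] [Module ℂ V] [Fintype ι] [Group G]
  {b : Basis ι ℂ V} {ρ : Representation ℂ G V} {T : Set G} {φ : G → MvPolynomial ι ℂ}

lemma IsCongruenceFamily.comp_mul_right (hφ : IsCongruenceFamily b ρ T φ) (u : G) :
    IsCongruenceFamily b ρ T (fun g ↦ φ (g * u)) := by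
  intro g t ht f hf hfix
  simpa [mul_assoc] using hφ (g * u) t ht f hf hfix

/-- The divided difference of a congruence family along a reflection is a congruence family. -/
lemma IsCongruenceFamily.exists_dividedDifference [Finite G] (hρ : Function.Injective ρ)
    (hφ : IsCongruenceFamily b ρ T φ) (hconj : ∀ g, ∀ t ∈ T, g * t * g⁻¹ ∈ T)
    (hinv : ∀ t ∈ T, t * t = 1) (hroot : ∀ t ∈ T, ∃ f a, IsReflectionWith (ρ t) f a)
    {s : G} (hs : s ∈ T) {f : Dual ℂ V} {a : V} (hf : IsReflectionWith (ρ s) f a) :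
    ∃ ψ, IsCongruenceFamily b ρ T ψ ∧
      ∀ g, φ g - φ (g * s) = linearFormPoly b (f ∘ₗ ρ g⁻¹) * ψ g := by
  have hcancel : ∀ (g : G) (x : V), ρ g⁻¹ (ρ g x) = x := fun g x ↦ by
    rw [← Module.End.mul_apply, ← map_mul]; simp
  have hrefl : ∀ g, IsReflectionWith (ρ (g * s * g⁻¹)) (f ∘ₗ ρ g⁻¹) (ρ g a) := by
    refine fun g ↦ ⟨by simp [hcancel, hf.1], fun x ↦ ?_⟩
    have := hcancel g⁻¹ x
    rw [inv_inv] at this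
    simp [hf.2, this]
  have hdvd : ∀ g, linearFormPoly b (f ∘ₗ ρ g⁻¹) ∣ φ g - φ (g * s) := fun g ↦ by
    simpa using hφ g _ (hconj g s hs) _ (hrefl g).ne_zero fun x ↦ (hrefl g).apply_eq_self_iff.1
  choose ψ hψ using hdvd
  refine ⟨ψ, fun g t ht k hk hfix ↦ ?_, hψ⟩
  by_cases hts : t = g * s * g⁻¹
  · have htg : t * g = g * s := by simp [hts]
    have hform : f ∘ₗ ρ (g * s)⁻¹ = -(f ∘ₗ ρ g⁻¹) := by
      ext x
      simp [inv_eq_of_mul_eq_one_left (hinv s hs), hf.2, hf.1]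
      ring
    have h1 := hψ (g * s)
    rw [mul_assoc, hinv s hs, mul_one, hform, map_neg] at h1
    have h2 : linearFormPoly b (f ∘ₗ ρ g⁻¹) * (ψ g - ψ (g * s)) = 0 := by
      linear_combination -h1 - hψ g
    rw [htg, (mul_eq_zero.1 h2).resolve_left (linearFormPoly_ne_zero b (hrefl g).ne_zero)]
    exact dvd_zero _
  · obtain ⟨ft, root, hft⟩ := hroot t ht
    have hkt : k = (k root / 2) • ft := hft.eq_smul hfix
    have hk0 : k root / 2 ≠ 0 := fun h ↦ hk (by rw [hkt, h, zero_smul])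
    have htk : ft = (k root / 2)⁻¹ • k := (eq_inv_smul_iff₀ hk0).2 hkt.symm
    have hform : f ∘ₗ ρ (t * g)⁻¹ =
        f ∘ₗ ρ g⁻¹ - ((f (ρ g⁻¹ root)) * (k root / 2)⁻¹) • k := by
      rw [mul_smul, ← htk]
      ext x
      simp [inv_eq_of_mul_eq_one_left (hinv t ht), hft.2]
      ring
    have h1 := hψ (t * g)
    rw [hform, map_sub, map_smul, MvPolynomial.smul_eq_C_mul] at h1
    have h2 : linearFormPoly b k ∣ linearFormPoly b (f ∘ₗ ρ g⁻¹) * (ψ g - ψ (t * g)) := by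
      have h3 : linearFormPoly b (f ∘ₗ ρ g⁻¹) * (ψ g - ψ (t * g)) =
          (φ g - φ (t * g)) - (φ (g * s) - φ (t * (g * s))) -
          linearFormPoly b k *
            (MvPolynomial.C ((f (ρ g⁻¹ root)) * (k root / 2)⁻¹) * ψ (t * g)) := by
        rw [← mul_assoc t g s]
        linear_combination -hψ g + h1
      rw [h3]
      exact ((hφ g t ht k hk hfix).sub (hφ (g * s) t ht k hk hfix)).sub (Dvd.intro _ rfl)
    refine ((prime_linearFormPoly b hk).dvd_or_dvd h2).resolve_left fun h3 ↦ hts ?_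
    obtain ⟨c, hc⟩ := exists_smul_eq_of_linearFormPoly_dvd b hk h3
    refine IsReflectionWith.eq_of_eq_smul (c := c * (k root / 2)) hρ hft (hrefl g) ?_
    rw [hc, mul_smul, ← hkt]

/-- The members of a congruence family indexed by the stabilizer of `v` agree at `v`. -/
lemma IsCongruenceFamily.eval_eq [Finite G] (hρ : Function.Injective ρ)
    (hconj : ∀ g, ∀ t ∈ T, g * t * g⁻¹ ∈ T) (hgen : Subgroup.closure T = ⊤)
    (hinv : ∀ t ∈ T, t * t = 1) (hroot : ∀ t ∈ T, ∃ f a, IsReflectionWith (ρ t) f a)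
    (hφ : IsCongruenceFamily b ρ T φ) {v : V} {g : G} (hg : ρ g v = v) :
    MvPolynomial.eval (b.repr v) (φ g) = MvPolynomial.eval (b.repr v) (φ 1) := by
  have hbound : ∃ d, ∀ g, φ g = 0 ∨ (φ g).totalDegree < d := by
    obtain ⟨d, hd⟩ := (Set.finite_range fun g ↦ (φ g).totalDegree).bddAbove
    exact ⟨d + 1, fun g ↦ .inr (Nat.lt_succ_of_le (hd ⟨g, rfl⟩))⟩
  obtain ⟨d, hd⟩ := hbound
  induction d generalizing φ with
  | zero => simp [fun g ↦ (hd g).resolve_right (Nat.not_lt_zero _)]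
  | succ d ih =>
    have hgv : ρ g⁻¹ v = v := by
      conv_lhs => rw [← hg]
      rw [← Module.End.mul_apply, ← map_mul]
      simp
    have htrans : ∀ u : G, ∀ φ : G → MvPolynomial ι ℂ, IsCongruenceFamily b ρ T φ →
        (∀ g, φ g = 0 ∨ (φ g).totalDegree < d + 1) →
        MvPolynomial.eval (b.repr v) (φ g) - MvPolynomial.eval (b.repr v) (φ (g * u)) =
          MvPolynomial.eval (b.repr v) (φ 1) - MvPolynomial.eval (b.repr v) (φ u) := by
      intro u
      have hu : u ∈ Subgroup.closure T := hgen ▸ Subgroup.mem_top u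
      induction hu using Subgroup.closure_induction with
      | mem s hs =>
        intro φ hφ hd
        obtain ⟨f, a, hf⟩ := hroot s hs
        obtain ⟨ψ, hψ, hψφ⟩ := hφ.exists_dividedDifference hρ hconj hinv hroot hs hf
        have hψd : ∀ g, ψ g = 0 ∨ (ψ g).totalDegree < d := fun g ↦ by
          refine eq_zero_or_totalDegree_lt_of_linearFormPoly_mul b ?_ (hd g) (hd (g * s)) (hψφ g)
          intro h0
          have := LinearMap.congr_fun h0 (ρ g a)
          rw [LinearMap.comp_apply, ← Module.End.mul_apply, ← map_mul] at this
          simp [hf.1] at this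
        have h1 := congrArg (MvPolynomial.eval (b.repr v)) (hψφ g)
        have h2 := congrArg (MvPolynomial.eval (b.repr v)) (hψφ 1)
        simp only [map_sub, map_mul, eval_linearFormPoly, LinearMap.comp_apply, hgv, inv_one,
          map_one, Module.End.one_apply, one_mul] at h1 h2
        rw [h1, h2, ih hψ hψd]
      | one => simp
      | mul u u' _ _ hu hu' =>
        intro φ hφ hd
        have h1 := hu' φ hφ hd
        have h2 := hu _ (hφ.comp_mul_right u') fun g ↦ hd (g * u')
        simp only [mul_assoc, one_mul] at h2
        linear_combination h1 + h2
      | inv u _ hu =>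
        intro φ hφ hd
        have h1 := hu _ (hφ.comp_mul_right u⁻¹) fun g ↦ hd (g * u⁻¹)
        simp only [mul_assoc, mul_inv_cancel, mul_one, one_mul] at h1
        linear_combination -h1
    have := Fintype.ofFinite G
    have hsum := Finset.sum_congr rfl fun u (_ : u ∈ Finset.univ) ↦ htrans u φ hφ hd
    rw [Finset.sum_sub_distrib, Finset.sum_sub_distrib,
      Fintype.sum_equiv (Equiv.mulLeft g) (fun u ↦ MvPolynomial.eval (b.repr v) (φ (g * u)))
        (fun u ↦ MvPolynomial.eval (b.repr v) (φ u)) (fun _ ↦ rfl), sub_left_inj] at hsum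
    simpa using hsum

end CongruenceFamilies

/-- Steinberg's fixed-point theorem for groups generated by order-two reflections: the pointwise
stabilizer of a subspace is generated by the reflections it contains. -/
theorem mem_closure_of_forall_mem_fixed {V G : Type*} [AddCommGroup V] [Module ℂ V]
    [FiniteDimensional ℂ V] [Group G] [Finite G] {ρ : Representation ℂ G V} {T : Set G}
    (hρ : Function.Injective ρ)
    (hconj : ∀ g, ∀ t ∈ T, g * t * g⁻¹ ∈ T) (hgen : Subgroup.closure T = ⊤)
    (hinv : ∀ t ∈ T, t * t = 1) (hroot : ∀ t ∈ T, ∃ f a, IsReflectionWith (ρ t) f a)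
    (E : Submodule ℂ V) {g : G} (hg : ∀ v ∈ E, ρ g v = v) :
    g ∈ Subgroup.closure {t ∈ T | ∀ v ∈ E, ρ t v = v} := by
  classical
  set H := Subgroup.closure {t ∈ T | ∀ v ∈ E, ρ t v = v}
  choose! f a hfa using hroot
  let F : Finset G := {t ∈ T | ¬ ∀ v ∈ E, ρ t v = v}.toFinite.toFinset
  have hF : ∀ t, t ∈ F ↔ t ∈ T ∧ ¬ ∀ v ∈ E, ρ t v = v := fun t ↦ by simp [F]
  obtain ⟨v, hvE, hv⟩ := Module.Dual.exists_forall_mem_ne_zero_of_forall_exists E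
    (fun t : F ↦ f t) fun t ↦ by
      obtain ⟨htT, htE⟩ := (hF t).1 t.2
      push Not at htE
      obtain ⟨x, hxE, hx⟩ := htE
      exact ⟨x, hxE, fun h ↦ hx ((hfa t htT).apply_eq_self_iff.2 h)⟩
  obtain ⟨b⟩ : Nonempty (Basis (Fin (finrank ℂ V)) ℂ V) := ⟨Module.finBasis ℂ V⟩
  have hφ : IsCongruenceFamily b ρ T
      fun g ↦ if g ∈ H then ∏ t ∈ F, linearFormPoly b (f t) else 0 := by
    intro g t ht k hk hfix
    by_cases htE : ∀ v ∈ E, ρ t v = v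
    · have htH : t ∈ H := Subgroup.subset_closure ⟨ht, htE⟩
      simp [H.mul_mem_cancel_left htH]
    · have hkp : linearFormPoly b k ∣ ∏ t ∈ F, linearFormPoly b (f t) := by
        have hkt := (hfa t ht).eq_smul hfix
        have hk0 : k (a t) / 2 ≠ 0 := fun h ↦ hk (by rw [hkt, h, zero_smul])
        have hft : f t = (k (a t) / 2)⁻¹ • k := (eq_inv_smul_iff₀ hk0).2 hkt.symm
        refine dvd_trans ⟨MvPolynomial.C (k (a t) / 2)⁻¹, ?_⟩
          (Finset.dvd_prod_of_mem _ ((hF t).2 ⟨ht, htE⟩))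
        rw [hft, map_smul, MvPolynomial.smul_eq_C_mul, mul_comm]
      refine dvd_sub ?_ ?_ <;> dsimp only <;> split_ifs <;> simp [hkp]
  by_contra hgH
  have heval := hφ.eval_eq hρ hconj hgen hinv (fun t ht ↦ ⟨_, _, hfa t ht⟩) (hg v hvE)
  simp only [hgH, H.one_mem, if_true, if_false, map_zero, map_prod, eval_linearFormPoly] at heval
  exact Finset.prod_ne_zero_iff.2 (fun t ht ↦ hv ⟨t, ht⟩) heval.symm

section ReflectionSubgroups

variable {V : Type*} [AddCommGroup V] [Module ℂ V]

lemma IsReflection.exists_isReflectionWith [FiniteDimensional ℂ V] {w : (Module.End ℂ V)ˣ}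
    (h : IsReflection w) (hw : w * w = 1) :
    ∃ f a, IsReflectionWith (w : Module.End ℂ V) f a := by
  have hrank := LinearMap.finrank_range_add_finrank_ker ((w : Module.End ℂ V) - 1)
  have h1 : finrank ℂ (LinearMap.range ((w : Module.End ℂ V) - 1)) = 1 := by
    have := h.2
    lia
  obtain ⟨a, ha0, ha⟩ := finrank_eq_one_iff'.1 h1
  choose c hc using fun x ↦ ha ⟨_, LinearMap.mem_range_self ((w : Module.End ℂ V) - 1) x⟩
  have ha0' : (a : V) ≠ 0 := fun h ↦ ha0 (Subtype.ext h)
  have hc' : ∀ x, c x • (a : V) = (w : Module.End ℂ V) x - x := fun x ↦ by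
    simpa using congrArg Subtype.val (hc x)
  have hinj := smul_left_injective ℂ ha0'
  let f : Dual ℂ V :=
    { toFun := fun x ↦ -c x
      map_add' := fun x y ↦ hinj (by
        simp only [neg_smul, add_smul, hc', map_add]; abel)
      map_smul' := fun r x ↦ hinj (by
        simp only [neg_smul, hc', map_smul, smul_eq_mul, RingHom.id_apply, mul_smul, smul_sub,
          mul_neg]) }
  have hf : ∀ x, (w : Module.End ℂ V) x = x - f x • (a : V) := fun x ↦ by
    simp [f, hc']
  refine ⟨f, a, ?_, hf⟩
  obtain ⟨x, hx⟩ : ∃ x, f x ≠ 0 := by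
    by_contra! hx
    exact h.1 (Units.ext (LinearMap.ext fun x ↦ by simp [hf, hx]))
  have hww : (w : Module.End ℂ V) ((w : Module.End ℂ V) x) = x := by
    simpa using LinearMap.congr_fun (congrArg Units.val hw) x
  have h2 : (f x * (f a - 2)) • (a : V) = 0 := by
    simp only [hf, map_sub, map_smul, smul_eq_mul] at hww
    linear_combination (norm := module) hww
  rw [smul_eq_zero_iff_left ha0', mul_eq_zero, sub_eq_zero] at h2
  exact h2.resolve_left hx

lemma IsReflection.conj {w : (Module.End ℂ V)ˣ} (h : IsReflection w) (g : (Module.End ℂ V)ˣ) :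
    IsReflection (g * w * g⁻¹) := by
  refine ⟨fun h1 ↦ h.1 (by simpa using conj_eq_one_iff.1 h1), ?_⟩
  rw [← h.2, add_left_inj]
  let e := LinearMap.GeneralLinearGroup.toLinearEquiv g
  have hmap : LinearMap.ker (((g * w * g⁻¹ : (Module.End ℂ V)ˣ) : Module.End ℂ V) - 1) =
      (LinearMap.ker ((w : Module.End ℂ V) - 1)).map (e : V →ₗ[ℂ] V) := by
    ext x
    obtain ⟨y, rfl⟩ := e.surjective x
    rw [Submodule.mem_map_equiv, e.symm_apply_apply]
    have hy : ((g * w * g⁻¹ : (Module.End ℂ V)ˣ) : Module.End ℂ V) (e y) =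
        e ((w : Module.End ℂ V) y) := by
      change (((g * w * g⁻¹ : (Module.End ℂ V)ˣ) : Module.End ℂ V) * (g : Module.End ℂ V)) y =
        ((g : Module.End ℂ V) * (w : Module.End ℂ V)) y
      rw [← Units.val_mul, ← Units.val_mul, inv_mul_cancel_right]
    rw [LinearMap.mem_ker, LinearMap.mem_ker, LinearMap.sub_apply, LinearMap.sub_apply, hy,
      Module.End.one_apply, Module.End.one_apply, sub_eq_zero, sub_eq_zero, e.injective.eq_iff]
  rw [hmap]
  exact LinearEquiv.finrank_map_eq e _

/-- The span of the roots of the elements of `A`. -/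
abbrev rootSpan (A : Set (Module.End ℂ V)ˣ) : Submodule ℂ V :=
  ⨆ s ∈ A, LinearMap.range ((s : Module.End ℂ V) - 1)

lemma sub_mem_rootSpan {A : Set (Module.End ℂ V)ˣ} {s : (Module.End ℂ V)ˣ} (hs : s ∈ A) (x : V) :
    (s : Module.End ℂ V) x - x ∈ rootSpan A :=
  Submodule.mem_iSup_of_mem s (Submodule.mem_iSup_of_mem hs ⟨x, by simp⟩)

lemma rootSpan_le_iff {A : Set (Module.End ℂ V)ˣ} {U : Submodule ℂ V} :
    rootSpan A ≤ U ↔ ∀ s ∈ A, ∀ x, (s : Module.End ℂ V) x - x ∈ U := by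
  simp [rootSpan, iSup_le_iff, LinearMap.range_le_iff_comap, Submodule.eq_top_iff']

lemma apply_mem_of_mem_closure {A : Set (Module.End ℂ V)ˣ} {U : Submodule ℂ V}
    (hA : ∀ s ∈ A, s * s = 1) (h : ∀ s ∈ A, ∀ x ∈ U, (s : Module.End ℂ V) x ∈ U)
    {w : (Module.End ℂ V)ˣ} (hw : w ∈ Subgroup.closure A) :
    ∀ x ∈ U, (w : Module.End ℂ V) x ∈ U := by
  induction hw using Subgroup.closure_induction'' with
  | mem s hs => exact h s hs
  | inv_mem s hs => rw [inv_eq_of_mul_eq_one_left (hA s hs)]; exact h s hs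
  | one => simp
  | mul u v _ _ hu hv => exact fun x hx ↦ hu _ (hv x hx)

lemma sub_mem_rootSpan_of_mem_closure {A : Set (Module.End ℂ V)ˣ} (hA : ∀ s ∈ A, s * s = 1)
    {w : (Module.End ℂ V)ˣ} (hw : w ∈ Subgroup.closure A) (x : V) :
    (w : Module.End ℂ V) x - x ∈ rootSpan A := by
  induction hw using Subgroup.closure_induction'' generalizing x with
  | mem s hs => exact sub_mem_rootSpan hs x
  | inv_mem s hs => rw [inv_eq_of_mul_eq_one_left (hA s hs)]; exact sub_mem_rootSpan hs x
  | one => simp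
  | mul u v _ _ hu hv => simpa using add_mem (hu ((v : Module.End ℂ V) x)) (hv x)

/-- A set of elements stable under conjugation by `c` has a root span stable under `c`. -/
lemma apply_mem_rootSpan_of_conj {A : Set (Module.End ℂ V)ˣ} {c : (Module.End ℂ V)ˣ}
    (hc : ∀ s ∈ A, c * s * c⁻¹ ∈ A) {x : V} (hx : x ∈ rootSpan A) :
    (c : Module.End ℂ V) x ∈ rootSpan A := by
  suffices rootSpan A ≤ (rootSpan A).comap (c : Module.End ℂ V) from this hx
  refine rootSpan_le_iff.2 fun s hs y ↦ ?_
  have := sub_mem_rootSpan (hc s hs) ((c : Module.End ℂ V) y)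
  rw [← Module.End.mul_apply, ← Units.val_mul] at this
  simpa using this

lemma apply_mem_rootSpan_of_mem {A : Set (Module.End ℂ V)ˣ} {s : (Module.End ℂ V)ˣ} (hs : s ∈ A)
    {x : V} (hx : x ∈ rootSpan A) : (s : Module.End ℂ V) x ∈ rootSpan A := by
  simpa using add_mem (sub_mem_rootSpan hs x) hx

/-- A pointwise stabilizer in a finite group generated by order-two reflections is generated by
reflections. -/
lemma le_closure_of_fixed [FiniteDimensional ℂ V] {W W₀ : Subgroup (Module.End ℂ V)ˣ}
    {R : Set (Module.End ℂ V)ˣ} (hWfin : (W : Set (Module.End ℂ V)ˣ).Finite)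
    (hR : R = {w : (Module.End ℂ V)ˣ | w ∈ W ∧ IsReflection w})
    (hgen : Subgroup.closure R = W) (horder : ∀ w ∈ R, w * w = 1) (E : Submodule ℂ V)
    (hE : ∀ w : (Module.End ℂ V)ˣ,
      w ∈ W₀ ↔ w ∈ W ∧ ∀ v ∈ E, (w : Module.End ℂ V) v = v) :
    W₀ ≤ Subgroup.closure (R ∩ W₀) := by
  intro w hw
  obtain ⟨hwW, hwE⟩ := (hE w).1 hw
  have : Finite W := hWfin
  let ρ : Representation ℂ W V := (Units.coeHom (Module.End ℂ V)).comp W.subtype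
  have hρ : Function.Injective ρ := Units.val_injective.comp W.subtype_injective
  have himage : W.subtype '' (W.subtype ⁻¹' R) = R :=
    Set.image_preimage_eq_of_subset fun t ht ↦ ⟨⟨t, (hR ▸ ht :).1⟩, rfl⟩
  have hmem := mem_closure_of_forall_mem_fixed (T := W.subtype ⁻¹' R) (g := ⟨w, hwW⟩) hρ
    (fun g t ht ↦ by
      subst hR
      exact ⟨(g * t * g⁻¹).2, ht.2.conj g⟩)
    (by
      refine Subgroup.map_injective W.subtype_injective ?_
      rw [MonoidHom.map_closure, himage, hgen, ← MonoidHom.range_eq_map, Subgroup.range_subtype])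
    (fun t ht ↦ Subtype.ext (horder t ht))
    (fun t ht ↦ (hR ▸ ht : (t : (Module.End ℂ V)ˣ) ∈ {w | w ∈ W ∧ IsReflection w}).2
      |>.exists_isReflectionWith (horder t ht))
    E hwE
  have hmap := Subgroup.mem_map_of_mem W.subtype hmem
  rw [MonoidHom.map_closure] at hmap
  refine Subgroup.closure_mono ?_ hmap
  rintro _ ⟨t, ⟨ht, htE⟩, rfl⟩
  exact ⟨ht, (hE t).2 ⟨t.2, htE⟩⟩

/-- The root span of the reflections of `W₁` outside `W₂` is stable under those inside `W₂`. -/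
lemma apply_mem_rootSpan_diff {W₁ W₂ : Subgroup (Module.End ℂ V)ˣ} {R : Set (Module.End ℂ V)ˣ}
    (hconj : ∀ g ∈ R, ∀ t ∈ R, g * t * g⁻¹ ∈ R) {c : (Module.End ℂ V)ˣ} (hcR : c ∈ R)
    (hc₁ : c ∈ W₁) (hc₂ : c ∈ W₂) {x : V} (hx : x ∈ rootSpan ((R ∩ W₁) \ (R ∩ W₂))) :
    (c : Module.End ℂ V) x ∈ rootSpan ((R ∩ W₁) \ (R ∩ W₂)) := by
  refine apply_mem_rootSpan_of_conj (fun s hs ↦ ?_) hx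
  refine ⟨⟨hconj c hcR s hs.1.1, mul_mem (mul_mem hc₁ hs.1.2) (inv_mem hc₁)⟩, fun h ↦ hs.2 ?_⟩
  refine ⟨hs.1.1, ?_⟩
  simpa [mul_assoc] using W₂.mul_mem (W₂.mul_mem (W₂.inv_mem hc₂) h.2) hc₂

/-- The reflections of an irreducible `W₁` outside `W₂` already span its root space. -/
lemma rootSpan_diff_eq {W₁ W₂ : Subgroup (Module.End ℂ V)ˣ} {R : Set (Module.End ℂ V)ˣ}
    (hconj : ∀ g ∈ R, ∀ t ∈ R, g * t * g⁻¹ ∈ R) (hinv : ∀ t ∈ R, t * t = 1)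
    (hone : 1 ∉ R) (hcl : W₁ ≤ Subgroup.closure (R ∩ W₁))
    (hirr : IsIrreducibleParabolic W₁ (R ∩ W₁)) (hle : ¬ W₁ ≤ W₂) :
    rootSpan ((R ∩ W₁) \ (R ∩ W₂)) = rootSpan (R ∩ W₁) := by
  refine (hirr.2 _ (biSup_mono fun s hs ↦ hs.1) fun w hw ↦
    apply_mem_of_mem_closure (fun s hs ↦ hinv s hs.1) (fun s hs x hx ↦ ?_) (hcl hw)).resolve_left
    fun hbot ↦ ?_
  · by_cases hs₂ : s ∈ W₂
    · exact apply_mem_rootSpan_diff hconj hs.1 hs.2 hs₂ hx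
    · exact apply_mem_rootSpan_of_mem (A := (R ∩ W₁) \ (R ∩ W₂)) ⟨hs, fun h ↦ hs₂ h.2⟩ hx
  · refine hle (hcl.trans ((Subgroup.closure_le _).2 fun s hs ↦ ?_))
    by_contra hs₂
    refine hone ((Units.ext (LinearMap.ext fun x ↦ ?_) : s = 1) ▸ hs.1)
    have := sub_mem_rootSpan (A := (R ∩ W₁) \ (R ∩ W₂)) ⟨hs, fun h ↦ hs₂ h.2⟩ x
    rw [rootSpan, hbot, Submodule.mem_bot] at this
    exact sub_eq_zero.1 this

end ReflectionSubgroups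

/-- for two irreducible parabolic subgroups `W₁, W₂` of a finite complex
2-reflection group `W`, the commutation of all reflections in `R₁ \ R₂` with all
reflections in `R₂ \ R₁` is equivalent to: `W₁ ⊆ W₂`, or `W₂ ⊆ W₁`, or
(`W₁ ∩ W₂ = {1}` and `W₁` and `W₂` commute elementwise). -/
theorem irreducible_parabolics_commutation_trichotomy
    {V : Type*} [AddCommGroup V] [Module ℂ V] [FiniteDimensional ℂ V]
    (W W₁ W₂ : Subgroup (Module.End ℂ V)ˣ)
    (hWfin : (W : Set (Module.End ℂ V)ˣ).Finite)
    (R : Set (Module.End ℂ V)ˣ)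
    (hR : R = {w : (Module.End ℂ V)ˣ | w ∈ W ∧ IsReflection w})
    (hgen : Subgroup.closure R = W)
    (horder : ∀ w ∈ R, w * w = 1)
    (R₁ R₂ : Set (Module.End ℂ V)ˣ)
    (hR₁ : R₁ = R ∩ (W₁ : Set (Module.End ℂ V)ˣ))
    (hR₂ : R₂ = R ∩ (W₂ : Set (Module.End ℂ V)ˣ))
    (hpar₁ : ∃ U : Submodule ℂ V, ∀ w : (Module.End ℂ V)ˣ,
      w ∈ W₁ ↔ w ∈ W ∧ ∀ v ∈ U, (w : Module.End ℂ V) v = v)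
    (hpar₂ : ∃ U : Submodule ℂ V, ∀ w : (Module.End ℂ V)ˣ,
      w ∈ W₂ ↔ w ∈ W ∧ ∀ v ∈ U, (w : Module.End ℂ V) v = v)
    (hStein₁ : ∀ w : (Module.End ℂ V)ˣ, w ∈ W₁ ↔ w ∈ W ∧
      ∀ v ∈ ⨅ s ∈ R₁, LinearMap.ker ((s : Module.End ℂ V) - 1),
        (w : Module.End ℂ V) v = v)
    (hStein₂ : ∀ w : (Module.End ℂ V)ˣ, w ∈ W₂ ↔ w ∈ W ∧
      ∀ v ∈ ⨅ s ∈ R₂, LinearMap.ker ((s : Module.End ℂ V) - 1),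
        (w : Module.End ℂ V) v = v)
    (hirr₁ : IsIrreducibleParabolic W₁ R₁)
    (hirr₂ : IsIrreducibleParabolic W₂ R₂) :
    (∀ s₁ ∈ R₁ \ R₂, ∀ s₂ ∈ R₂ \ R₁, s₁ * s₂ = s₂ * s₁) ↔
      (W₁ ≤ W₂ ∨ W₂ ≤ W₁ ∨
        (W₁ ⊓ W₂ = ⊥ ∧ ∀ a ∈ W₁, ∀ b ∈ W₂, a * b = b * a)) := by
  have hroot : ∀ t ∈ R, ∃ f a, IsReflectionWith (t : Module.End ℂ V) f a := fun t ht ↦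
    (hR ▸ ht : t ∈ {w | w ∈ W ∧ IsReflection w}).2.exists_isReflectionWith (horder t ht)
  have hconj : ∀ g ∈ R, ∀ t ∈ R, g * t * g⁻¹ ∈ R := by
    subst hR
    exact fun g hg t ht ↦ ⟨mul_mem (mul_mem hg.1 ht.1) (inv_mem hg.1), ht.2.conj g⟩
  have hone : 1 ∉ R := by
    subst hR
    exact fun h ↦ h.2.1 rfl
  have hcl₁ : W₁ ≤ Subgroup.closure (R ∩ W₁) :=
    le_closure_of_fixed hWfin hR hgen horder _ hStein₁
  have hcl₂ : W₂ ≤ Subgroup.closure (R ∩ W₂) :=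
    le_closure_of_fixed hWfin hR hgen horder _ hStein₂
  clear hStein₁ hStein₂ hpar₁ hpar₂
  subst hR₁ hR₂
  constructor
  · intro hcomm
    refine or_iff_not_imp_left.2 fun h₁₂ ↦ or_iff_not_imp_left.2 fun h₂₁ ↦ ?_
    have hV₁ := rootSpan_diff_eq hconj horder hone hcl₁ hirr₁ h₁₂
    have hV₂ := rootSpan_diff_eq hconj horder hone hcl₂ hirr₂ h₂₁
    have hfix : ∀ s ∈ (R ∩ W₁) \ (R ∩ W₂), ∀ x ∈ rootSpan ((R ∩ W₂) \ (R ∩ W₁)),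
        (s : Module.End ℂ V) x = x := by
      intro s hs x hx
      suffices rootSpan ((R ∩ W₂) \ (R ∩ W₁)) ≤ LinearMap.ker ((s : Module.End ℂ V) - 1) from
        sub_eq_zero.1 (this hx)
      refine rootSpan_le_iff.2 fun t ht y ↦ ?_
      obtain ⟨f, a, hf⟩ := hroot s hs.1.1
      obtain ⟨g, b, hg⟩ := hroot t ht.1.1
      have hfb := hf.apply_eq_zero_of_commute hg (congrArg Units.val (hcomm s hs t ht))
        fun h ↦ hs.2 (Units.ext h ▸ ht.1)
      simp [hg.2, hf.2, hfb]
    have hdisj : rootSpan (R ∩ W₁) ⊓ rootSpan (R ∩ W₂) = ⊥ := by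
      refine (hirr₁.2 _ inf_le_left fun w hw ↦ apply_mem_of_mem_closure
        (fun s hs ↦ horder s hs.1) (fun s hs x hx ↦ ?_) (hcl₁ hw)).resolve_right fun htop ↦ ?_
      · refine ⟨apply_mem_rootSpan_of_mem hs hx.1, ?_⟩
        by_cases hs₂ : s ∈ W₂
        · exact apply_mem_rootSpan_of_mem (A := R ∩ W₂) ⟨hs.1, hs₂⟩ hx.2
        · rw [hfix s ⟨hs, fun h ↦ hs₂ h.2⟩ x (hV₂ ▸ hx.2)]
          exact hx.2
      · refine hirr₁.1 ((hV₁.symm.le.trans (rootSpan_le_iff.2 fun s hs x ↦ ?_)).antisymm bot_le)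
        obtain ⟨f, a, hf⟩ := hroot s hs.1.1
        have ha := hfix s hs ((s : Module.End ℂ V) a - a) (by
          rw [hV₂]
          exact (inf_eq_left.1 htop) (sub_mem_rootSpan hs.1 a))
        have ha0 : a = 0 := by
          simp only [hf.2, hf.1, map_sub, map_smul, smul_eq_mul] at ha
          linear_combination (norm := module) (1 / 4 : ℂ) • ha
        simp [hf.2, ha0]
    have hinter : ∀ w ∈ W₁, w ∈ W₂ → w = 1 := by
      refine fun w hw₁ hw₂ ↦ Units.ext (LinearMap.ext fun x ↦ sub_eq_zero.1 ?_)
      rw [← Submodule.mem_bot ℂ, ← hdisj]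
      exact ⟨sub_mem_rootSpan_of_mem_closure (fun s hs ↦ horder s hs.1) (hcl₁ hw₁) x,
        sub_mem_rootSpan_of_mem_closure (fun s hs ↦ horder s hs.1) (hcl₂ hw₂) x⟩
    refine ⟨(Subgroup.eq_bot_iff_forall _).2 fun w hw ↦ hinter w hw.1 hw.2, ?_⟩
    have hcent : W₁ ≤ Subgroup.centralizer (W₂ : Set (Module.End ℂ V)ˣ) := by
      refine hcl₁.trans ((Subgroup.closure_le _).2 fun s hs ↦ ?_)
      refine Subgroup.mem_centralizer_iff.2 fun t ht ↦ ?_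
      have hle : W₂ ≤ Subgroup.centralizer {s} := by
        refine hcl₂.trans ((Subgroup.closure_le _).2 fun t ht ↦ ?_)
        refine Subgroup.mem_centralizer_singleton_iff.2
          (hcomm s ⟨hs, fun h ↦ ?_⟩ t ⟨ht, fun h ↦ ?_⟩).symm
        · exact hone (hinter s hs.2 h.2 ▸ hs.1)
        · exact hone (hinter t h.2 ht.2 ▸ ht.1)
      exact Subgroup.mem_centralizer_singleton_iff.1 (hle ht)
    exact fun a ha b hb ↦ (Subgroup.mem_centralizer_iff.1 (hcent ha) b hb).symm
  · rintro (h | h | ⟨-, h⟩) s hs t ht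
    · exact (hs.2 ⟨hs.1.1, h hs.1.2⟩).elim
    · exact (ht.2 ⟨ht.1.1, h ht.1.2⟩).elim
    · exact h s hs.1.2 t ht.1.2
end

section
/- Let (G, G⁺, Δ) be a Garside structure and x ∈ G. Let y, z ∈ R(x) and u ∈ G⁺ with u⁻¹yu = z. Define iterated transports by u^{(0)} = u and u^{(i+1)} = the transport of u^{(i)} at φ^i(y) (so that u^{(i)} conjugates φ^i(y) to φ^i(z)). Then there exists k > 0 such that φ^k(y) = y and u^{(k)} = u. -/
open scoped Pointwise Classical

/-- A Garside structure on a group `G`: a submonoid `pos` of positive elements with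
trivial units, prefix and suffix lattice operations, and a Garside element `delta`. -/
structure GarsideStructure (G : Type*) [Group G] where
  /-- the submonoid of positive elements -/
  pos : Submonoid G
  /-- the Garside element Δ -/
  delta : G
  /-- meet for the prefix order -/
  meet : G → G → G
  /-- join for the prefix order -/
  join : G → G → G
  /-- meet for the suffix order -/
  rmeet : G → G → G
  /-- join for the suffix order -/
  rjoin : G → G → G
  units_triv : ∀ a : G, a ∈ pos → a⁻¹ ∈ pos → a = 1
  meet_le_left : ∀ a b : G, (meet a b)⁻¹ * a ∈ pos
  meet_le_right : ∀ a b : G, (meet a b)⁻¹ * b ∈ pos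
  le_meet : ∀ a b c : G, c⁻¹ * a ∈ pos → c⁻¹ * b ∈ pos → c⁻¹ * meet a b ∈ pos
  le_join_left : ∀ a b : G, a⁻¹ * join a b ∈ pos
  le_join_right : ∀ a b : G, b⁻¹ * join a b ∈ pos
  join_le : ∀ a b c : G, a⁻¹ * c ∈ pos → b⁻¹ * c ∈ pos → (join a b)⁻¹ * c ∈ pos
  rmeet_le_left : ∀ a b : G, a * (rmeet a b)⁻¹ ∈ pos
  rmeet_le_right : ∀ a b : G, b * (rmeet a b)⁻¹ ∈ pos
  le_rmeet : ∀ a b c : G, a * c⁻¹ ∈ pos → b * c⁻¹ ∈ pos → rmeet a b * c⁻¹ ∈ pos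
  rjoin_le_left : ∀ a b : G, rjoin a b * a⁻¹ ∈ pos
  rjoin_le_right : ∀ a b : G, rjoin a b * b⁻¹ ∈ pos
  rjoin_le : ∀ a b c : G, c * a⁻¹ ∈ pos → c * b⁻¹ ∈ pos → c * (rjoin a b)⁻¹ ∈ pos
  delta_pos : delta ∈ pos
  /-- Δ is balanced: its positive prefixes coincide with its positive suffixes -/
  delta_balanced : ∀ s : G, s ∈ pos → (s⁻¹ * delta ∈ pos ↔ delta * s⁻¹ ∈ pos)
  /-- the set of simple elements (divisors of Δ) is finite -/
  divDelta_finite : {s : G | s ∈ pos ∧ s⁻¹ * delta ∈ pos}.Finite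
  /-- the simple elements generate `G` -/
  divDelta_generates : Subgroup.closure {s : G | s ∈ pos ∧ s⁻¹ * delta ∈ pos} = ⊤
  /-- the atoms generate the positive monoid -/
  atoms_generate :
    Submonoid.closure {a : G | a ∈ pos ∧ a ≠ 1 ∧
      ∀ b ∈ pos, b⁻¹ * a ∈ pos → b = 1 ∨ b = a} = pos
  /-- every atom divides Δ -/
  atoms_divide_delta : ∀ a : G, a ∈ pos → a ≠ 1 →
    (∀ b ∈ pos, b⁻¹ * a ∈ pos → b = 1 ∨ b = a) → a⁻¹ * delta ∈ pos
  /-- every element is bounded below and above by powers of Δ -/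
  delta_bounds : ∀ x : G, ∃ p q : ℤ, p ≤ q ∧ (delta ^ p)⁻¹ * x ∈ pos ∧ x⁻¹ * delta ^ q ∈ pos
  /-- conjugation by Δ maps the positive monoid bijectively onto itself -/
  conj_delta : ∀ a : G, a ∈ pos ↔ delta * a * delta⁻¹ ∈ pos
  /-- some positive power of Δ is central -/
  central_power : ∃ n : ℕ, 0 < n ∧ delta ^ n ∈ Subgroup.center G
  /-- no infinite strictly decreasing (for the prefix order) sequence of positive elements -/
  no_infinite_descent : ¬ ∃ f : ℕ → G, (∀ n, f n ∈ pos) ∧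
    ∀ n, (f (n + 1))⁻¹ * f n ∈ pos ∧ f (n + 1) ≠ f n

namespace GarsideStructure

variable {G : Type*} [Group G] (S : GarsideStructure G)

/-- the prefix order: `a ≼ b` iff `a⁻¹ * b` is positive -/
def le (a b : G) : Prop := a⁻¹ * b ∈ S.pos

/-- the set of positive prefixes of an element -/
def Div (d : G) : Set G := {s : G | s ∈ S.pos ∧ S.le s d}

/-- atoms: nontrivial positive elements with no nontrivial proper positive prefix -/
def IsAtomic (a : G) : Prop :=
  a ∈ S.pos ∧ a ≠ 1 ∧ ∀ b ∈ S.pos, S.le b a → b = 1 ∨ b = a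

/-- the set of atoms -/
def atoms : Set G := {a : G | S.IsAtomic a}

/-- the left denominator of `x`: `D_L x = (1 ∧ x)⁻¹` -/
def DL (x : G) : G := (S.meet 1 x)⁻¹

/-- the left numerator of `x`: `N_L x = D_L x * x` -/
def NL (x : G) : G := S.DL x * x

/-- the (left) swap `φ(x) = N_L x * (D_L x)⁻¹ = D_L x * x * (D_L x)⁻¹` -/
def swap (x : G) : G := S.DL x * x * (S.DL x)⁻¹

/-- an element is recurrent if it is fixed by some positive iterate of the swap map -/
def Recurrent (x : G) : Prop := ∃ m : ℕ, 0 < m ∧ S.swap^[m] x = x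

/-- the set `R(x)` of recurrent conjugates of `x` -/
def Rset (x : G) : Set G := {y : G | IsConj x y ∧ S.Recurrent y}

/-- the set `C⁺(x)` of positive conjugates of `x` -/
def Cpos (x : G) : Set G := {y : G | IsConj x y ∧ y ∈ S.pos}

/-- the set `C⁻(x)` of negative conjugates of `x` -/
def Cneg (x : G) : Set G := {y : G | IsConj x y ∧ y⁻¹ ∈ S.pos}

/-- the transport of `u` at `y`: with `y = a⁻¹ b` reduced, `u^{(1)} = (a u) ∧ (b u)` -/
def transport (y u : G) : G := S.meet (S.DL y * u) (S.NL y * u)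

/-- `Δ_X`: the least upper bound for the prefix order of a set `X` (`1` if there is none) -/
noncomputable def deltaOf (X : Set G) : G :=
  if h : ∃ d : G, (∀ x ∈ X, S.le x d) ∧ ∀ c : G, (∀ x ∈ X, S.le x c) → S.le d c
  then h.choose else 1

/-- the closure `X̄ = Div(Δ_X) ∩ 𝒜` of a set of atoms -/
noncomputable def closureOf (X : Set G) : Set G := S.Div (S.deltaOf X) ∩ S.atoms

/-- the subgroup `G_X` generated by the closure of `X` -/
noncomputable def GX (X : Set G) : Subgroup G := Subgroup.closure (S.closureOf X)

/-- the support of an element: the closure of the set of atoms appearing in atom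
factorizations of its left denominator and left numerator -/
noncomputable def supp (x : G) : Set G :=
  if h : ∃ p : List G × List G,
      (∀ a ∈ p.1, a ∈ S.atoms) ∧ (∀ a ∈ p.2, a ∈ S.atoms) ∧
      p.1.prod = S.DL x ∧ p.2.prod = S.NL x
  then S.closureOf ({a : G | a ∈ h.choose.1} ∪ {a : G | a ∈ h.choose.2})
  else ∅

/-- an LCM-Garside structure -/
structure IsLCM : Prop where
  delta_eq : S.delta = S.deltaOf S.atoms
  balanced : ∀ X ⊆ S.atoms, ∀ s ∈ S.pos,
    (S.le s (S.deltaOf X) ↔ S.deltaOf X * s⁻¹ ∈ S.pos)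
  div_eq : ∀ X ⊆ S.atoms,
    S.Div (S.deltaOf X) = S.Div S.delta ∩ {g : G | g ∈ S.GX X ∧ g ∈ S.pos}
  factor_closed : ∀ X ⊆ S.atoms, ∀ g : G, g ∈ S.GX X → g ∈ S.pos →
    ∀ a b : G, a ∈ S.pos → b ∈ S.pos → g = a * b → a ∈ S.GX X ∧ b ∈ S.GX X
  lattice_closed : ∀ X ⊆ S.atoms, ∀ a b : G, a ∈ S.GX X → b ∈ S.GX X →
    S.meet a b ∈ S.GX X ∧ S.join a b ∈ S.GX X
  fraction_closed : ∀ X ⊆ S.atoms, ∀ g : G, g ∈ S.GX X →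
    S.DL g ∈ S.GX X ∧ S.NL g ∈ S.GX X

/-- a standard parabolic subgroup: the subgroup generated by a saturated set of atoms -/
noncomputable def IsStandardParabolic (H : Subgroup G) : Prop :=
  ∃ X : Set G, X ⊆ S.atoms ∧ S.closureOf X = X ∧ H = S.GX X

/-- a parabolic subgroup: a conjugate of a standard parabolic subgroup -/
noncomputable def IsParabolic (H : Subgroup G) : Prop :=
  ∃ (P : Subgroup G) (c : G), S.IsStandardParabolic P ∧
    H = Subgroup.map (MulAut.conj c).toMonoidHom P

/-- the structure is support-preserving if conjugations between positive elements
conjugate the corresponding parabolic subgroups of the supports -/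
noncomputable def SupportPreserving : Prop :=
  ∀ y ∈ S.pos, ∀ z ∈ S.pos, ∀ α : G, α⁻¹ * y * α = z →
    Subgroup.map (MulAut.conj α⁻¹).toMonoidHom (S.GX (S.supp y)) = S.GX (S.supp z)

/-- `P` is the parabolic closure of `x` -/
noncomputable def IsParabolicClosure (x : G) (P : Subgroup G) : Prop :=
  S.IsParabolic P ∧ x ∈ P ∧ ∀ H : Subgroup G, S.IsParabolic H → x ∈ H → P ≤ H

end GarsideStructure


namespace GarsideStructure

variable {G : Type*} [Group G] (S : GarsideStructure G)

theorem le_def {a b : G} : S.le a b ↔ a⁻¹ * b ∈ S.pos := Iff.rfl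

theorem le_trans {a b c : G} (hab : S.le a b) (hbc : S.le b c) : S.le a c := by
  have h := S.pos.mul_mem hab hbc
  rwa [show a⁻¹ * b * (b⁻¹ * c) = a⁻¹ * c by group] at h

theorem le_antisymm {a b : G} (hab : S.le a b) (hba : S.le b a) : a = b := by
  have h := S.units_triv (a⁻¹ * b) hab (by simpa [le_def] using hba)
  exact inv_mul_eq_one.mp h

theorem mul_le_mul_left_iff (c : G) {a b : G} : S.le (c * a) (c * b) ↔ S.le a b := by
  simp only [le_def]
  rw [show (c * a)⁻¹ * (c * b) = a⁻¹ * b by group]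

theorem le_mul_left_iff (c : G) {a b : G} : S.le a (c * b) ↔ S.le (c⁻¹ * a) b := by
  simp [le_def, mul_assoc]

/-- Right multiplication by `Δ` is monotone for the prefix order. -/
theorem mul_delta_le_mul_delta_iff {a b : G} :
    S.le (a * S.delta) (b * S.delta) ↔ S.le a b := by
  simp only [le_def]
  rw [S.conj_delta ((a * S.delta)⁻¹ * (b * S.delta))]
  simp [mul_assoc]

/-- Left multiplication distributes over the prefix meet. -/
theorem mul_meet (c a b : G) : c * S.meet a b = S.meet (c * a) (c * b) := by
  apply S.le_antisymm
  · exact S.le_meet _ _ _ ((S.mul_le_mul_left_iff c).2 (S.meet_le_left a b))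
      ((S.mul_le_mul_left_iff c).2 (S.meet_le_right a b))
  · rw [le_mul_left_iff]
    refine S.le_meet _ _ _ ?_ ?_
    · exact (S.le_mul_left_iff c).1 (S.meet_le_left _ _)
    · exact (S.le_mul_left_iff c).1 (S.meet_le_right _ _)

theorem DL_mem_pos (y : G) : S.DL y ∈ S.pos := by
  simpa [DL] using S.meet_le_left 1 y

theorem NL_mem_pos (y : G) : S.NL y ∈ S.pos := S.meet_le_right 1 y

theorem meet_DL_NL (y : G) : S.meet (S.DL y) (S.NL y) = 1 := by
  have h := S.mul_meet (S.DL y) 1 y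
  rw [mul_one] at h
  rw [NL, ← h, DL, inv_mul_cancel]

theorem transport_mem_pos (y : G) {u : G} (hu : u ∈ S.pos) : S.transport y u ∈ S.pos := by
  have h := S.le_meet (S.DL y * u) (S.NL y * u) 1
    (by simpa using S.pos.mul_mem (S.DL_mem_pos y) hu)
    (by simpa using S.pos.mul_mem (S.NL_mem_pos y) hu)
  simpa [transport] using h

/-- The left denominators of `y` and of `u⁻¹ y u` turn `u` into its transport at `y`. -/
theorem transport_eq (y u : G) :
    S.transport y u = S.DL y * u * (S.DL (u⁻¹ * y * u))⁻¹ := by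
  change _ = S.DL y * u * (S.meet 1 (u⁻¹ * y * u))⁻¹⁻¹
  rw [inv_inv, mul_meet, transport, NL]
  congr 1 <;> group

theorem swap_conj (y u : G) :
    (S.transport y u)⁻¹ * S.swap y * S.transport y u = S.swap (u⁻¹ * y * u) := by
  rw [transport_eq, swap, swap]
  group

/-- Transport preserves upper bounds that are central. -/
theorem transport_le_of_mem_center (y : G) {u c : G} (hc : c ∈ Subgroup.center G)
    (h : S.le u c) : S.le (S.transport y u) c := by
  have hmul (g : G) : S.le (g * u) (c * g) := by
    rw [← Subgroup.mem_center_iff.1 hc g]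
    exact (S.mul_le_mul_left_iff g).2 h
  have hmeet : S.meet (c * S.DL y) (c * S.NL y) = c := by
    rw [← mul_meet, meet_DL_NL, mul_one]
  rw [← hmeet]
  exact S.le_meet _ _ _ (S.le_trans (S.meet_le_left _ _) (hmul _))
    (S.le_trans (S.meet_le_right _ _) (hmul _))

theorem finite_Div_delta_pow (q : ℕ) : (S.Div (S.delta ^ q)).Finite := by
  induction q with
  | zero =>
    refine (Set.finite_singleton (1 : G)).subset ?_
    rintro s ⟨hs, hs1⟩
    exact S.units_triv s hs (by simpa [le_def] using hs1)
  | succ q ih =>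
    refine (ih.mul (show (S.Div S.delta).Finite from S.divDelta_finite)).subset ?_
    rintro s ⟨hs, hsq⟩
    set d := S.meet (S.delta ^ q) s with hd
    have hdpos : d ∈ S.pos := by
      have h := S.le_meet (S.delta ^ q) s 1
        (by simpa using S.pos.pow_mem S.delta_pos q) (by simpa using hs)
      simpa [hd] using h
    refine Set.mem_mul.2 ⟨d, ⟨hdpos, S.meet_le_left _ _⟩, d⁻¹ * s,
      ⟨S.meet_le_right _ _, ?_⟩, by group⟩
    rw [← le_mul_left_iff]
    have hle : S.le (s * S.delta⁻¹) d := by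
      refine S.le_meet _ _ _ ?_ ?_
      · rw [← le_def, ← mul_delta_le_mul_delta_iff]
        simpa [pow_succ] using hsq
      · rw [← le_def, ← mul_delta_le_mul_delta_iff]
        simpa [le_def] using S.delta_pos
    simpa using S.mul_delta_le_mul_delta_iff.2 hle

/-- Every element lies below a central power of `Δ`. -/
theorem exists_le_delta_pow_mem_center (u : G) :
    ∃ q : ℕ, S.delta ^ q ∈ Subgroup.center G ∧ S.le u (S.delta ^ q) := by
  obtain ⟨n, hn, hcen⟩ := S.central_power
  obtain ⟨_, q, -, -, hq⟩ := S.delta_bounds u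
  refine ⟨n * q.toNat, by rw [pow_mul]; exact pow_mem hcen _, S.le_trans hq ?_⟩
  have hge : q ≤ ((n * q.toNat : ℕ) : ℤ) :=
    (Int.self_le_toNat q).trans (by exact_mod_cast Nat.le_mul_of_pos_left _ hn)
  obtain ⟨r, hr⟩ := Int.eq_ofNat_of_zero_le (sub_nonneg.2 hge)
  rw [le_def, ← zpow_natCast, ← zpow_neg, ← zpow_add, neg_add_eq_sub, hr, zpow_natCast]
  exact S.pos.pow_mem S.delta_pos r

end GarsideStructure

/-- iterated transports of a positive conjugator between two recurrent
conjugates of `x` repeat: there is `k > 0` with `φᵏ(y) = y` and `u⁽ᵏ⁾ = u`. -/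
theorem garside_transport_repeats {G : Type*} [Group G]
    (S : GarsideStructure G) (x y z u : G)
    (hy : y ∈ S.Rset x) (hz : z ∈ S.Rset x) (hu : u ∈ S.pos)
    (hconj : u⁻¹ * y * u = z)
    (U : ℕ → G) (hU0 : U 0 = u)
    (hUs : ∀ i : ℕ, U (i + 1) = S.transport (S.swap^[i] y) (U i)) :
    ∃ k : ℕ, 0 < k ∧ S.swap^[k] y = y ∧ U k = u := by
  obtain ⟨-, m, hm, hym⟩ := hy
  obtain ⟨-, n, hn, hzn⟩ := hz
  have hyN : Function.IsPeriodicPt S.swap (m * n) y :=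
    Function.IsPeriodicPt.mul_const hym n
  have hzN : Function.IsPeriodicPt S.swap (m * n) z :=
    Function.IsPeriodicPt.const_mul hzn m
  have hUconj (i : ℕ) : (U i)⁻¹ * S.swap^[i] y * U i = S.swap^[i] z := by
    induction i with
    | zero => simpa [hU0] using hconj
    | succ i ih =>
      rw [hUs, Function.iterate_succ_apply', Function.iterate_succ_apply', S.swap_conj, ih]
  have hUeq (i : ℕ) :
      U (i + 1) = S.DL (S.swap^[i] y) * U i * (S.DL (S.swap^[i] z))⁻¹ := by
    rw [hUs, S.transport_eq, hUconj]
  obtain ⟨q, hcen, hq⟩ := S.exists_le_delta_pow_mem_center u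
  have hbound (i : ℕ) : U i ∈ S.Div (S.delta ^ q) := by
    induction i with
    | zero => exact hU0 ▸ ⟨hu, hq⟩
    | succ i ih =>
      rw [hUs]
      exact ⟨S.transport_mem_pos _ ih.1, S.transport_le_of_mem_center _ hcen ih.2⟩
  obtain ⟨s, t, hst, heq⟩ := Set.Finite.exists_lt_map_eq_of_forall_mem
    (f := fun j ↦ U (j * (m * n))) (fun j ↦ hbound _) (S.finite_Div_delta_pow q)
  have hyd : S.swap^[(t - s) * (m * n)] y = y := hyN.const_mul (t - s)
  have hzd : S.swap^[(t - s) * (m * n)] z = z := hzN.const_mul (t - s)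
  have hback (i : ℕ) (h : U (i + (t - s) * (m * n)) = U i) :
      U ((t - s) * (m * n)) = u := by
    induction i with
    | zero => simpa [hU0] using h
    | succ i ih =>
      refine ih ?_
      rw [Nat.add_right_comm, hUeq, hUeq, Function.iterate_add_apply, hyd,
        Function.iterate_add_apply, hzd] at h
      exact mul_left_cancel (mul_right_cancel h)
  refine ⟨(t - s) * (m * n), by have := Nat.sub_pos_of_lt hst; positivity, hyd,
    hback (s * (m * n)) ?_⟩
  rw [← add_mul, Nat.add_sub_cancel' hst.le]
  exact heq.symm
end
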